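/- Let F be the free group on generators x₁, y₁, x₂, y₂, let H be the 4-dimensional ℚ-vector space with basis X₁,Y₁,X₂,Y₂ equipped with the alternating bilinear form ⟨·,·⟩ with ⟨Xᵢ,Yⱼ⟩ = δᵢⱼ and ⟨Xᵢ,Xⱼ⟩ = ⟨Yᵢ,Yⱼ⟩ = 0, let φ : F → H be the homomorphism with φ(xᵢ) = Xᵢ and φ(yᵢ) = Yᵢ, and let ℓ : F → ∧²H be a half-intersection cocycle for φ with ℓ(xᵢ) = (1/2)·Xᵢ∧Yᵢ and ℓ(yᵢ) = −(1/2)·Xᵢ∧Yᵢ for i = 1, 2. Then for a = x₁x₂y₂x₂⁻¹ and b = y₂x₁⁻¹ one has ⟨φ(a),φ(b)⟩ = 0, ℓ(a)(φ(b)) + ℓ(b)(φ(a)) = X₁, and there are no integers m, n with X₁ = m·φ(a) + n·φ(b). -/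

import Mathlib

/-!
Put `A = φ a = X₁ + Y₂`, `B = φ b = Y₂ - X₁` and `Ω = X₁∧Y₁ + X₂∧Y₂`. Conjugation changes a
half-intersection cocycle by `ℓ(ghg⁻¹) = ℓ(h) + φ(g)∧φ(h)`, which turns the term `-½ X₂∧Y₂` of
`ℓ y₂` into `+½ X₂∧Y₂`, so that `ℓ a = ½(Ω + X₁∧Y₂)` and `ℓ b = ½(-Ω + X₁∧Y₂)`. Now `Ω` acts
as `-1` on `X₁` and `Y₂`, while `X₁∧Y₂` kills both since `⟨X₁, Y₂⟩ = 0`. Hence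
`ℓ a (B) + ℓ b (A) = ½(A - B) = X₁`, which is not an integral combination of `A` and `B`.
-/

open scoped TensorProduct

/-- The wedge `x ∧ y` as an element of the exterior square `⋀[ℚ]^2 H`. -/
noncomputable def wedge {H : Type*} [AddCommGroup H] [Module ℚ H] (x y : H) : ⋀[ℚ]^2 H :=
  ⟨ExteriorAlgebra.ι ℚ x * ExteriorAlgebra.ι ℚ y, by
    rw [ExteriorAlgebra.exteriorPower, pow_two]
    exact Submodule.mul_mem_mul (LinearMap.mem_range_self _ x) (LinearMap.mem_range_self _ y)⟩

/-- `ℓ : π → ⋀²H` is a half-intersection cocycle for `φ` if `ℓ(1) = 0` and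
`ℓ(gh) = ℓ(g) + ℓ(h) + (1/2)·φ(g)∧φ(h)`. -/
def IsHalfCocycle {π H : Type*} [Group π] [AddCommGroup H] [Module ℚ H]
    (φ : π → H) (ℓ : π → ⋀[ℚ]^2 H) : Prop :=
  ℓ 1 = 0 ∧ ∀ g h : π, ℓ (g * h) = ℓ g + ℓ h + (1/2 : ℚ) • wedge (φ g) (φ h)

/-- The standard basis vector `Xᵢ`/`Yᵢ` of the homology of the genus-2 surface:
`e 0 = X₁`, `e 1 = Y₁`, `e 2 = X₂`, `e 3 = Y₂`. -/
def e (i : Fin 4) : Fin 4 → ℚ := Pi.single i 1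

section Wedge

variable {H : Type*} [AddCommGroup H] [Module ℚ H]

theorem wedge_self (x : H) : wedge x x = 0 :=
  Subtype.ext (ExteriorAlgebra.ι_sq_zero x)

theorem wedge_add_left (x x' y : H) : wedge (x + x') y = wedge x y + wedge x' y :=
  Subtype.ext (by simp [wedge, add_mul])

theorem wedge_neg_right (x y : H) : wedge x (-y) = -wedge x y :=
  Subtype.ext (by simp [wedge])

theorem neg_wedge_swap (x y : H) : -wedge x y = wedge y x :=
  Subtype.ext (neg_eq_of_add_eq_zero_right (ExteriorAlgebra.ι_add_mul_swap x y))

end Wedge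

section HalfCocycle

variable {π H : Type*} [Group π] [AddCommGroup H] {φ : π → H}

theorem map_inv_eq_neg_of_map_mul_eq_add (hφ : ∀ g h, φ (g * h) = φ g + φ h) (g : π) :
    φ g⁻¹ = -φ g :=
  map_inv (MonoidHom.mk' (fun g ↦ Multiplicative.ofAdd (φ g)) hφ) g

namespace IsHalfCocycle

variable [Module ℚ H] {ℓ : π → ⋀[ℚ]^2 H}

theorem map_inv (hℓ : IsHalfCocycle φ ℓ) (hφ : ∀ g h, φ (g * h) = φ g + φ h) (g : π) :
    ℓ g⁻¹ = -ℓ g := by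
  have h := hℓ.2 g g⁻¹
  rw [mul_inv_cancel, hℓ.1, map_inv_eq_neg_of_map_mul_eq_add hφ, wedge_neg_right, wedge_self,
    neg_zero, smul_zero, add_zero] at h
  exact eq_neg_of_add_eq_zero_right h.symm

theorem map_mul_inv (hℓ : IsHalfCocycle φ ℓ) (hφ : ∀ g h, φ (g * h) = φ g + φ h) (g h : π) :
    ℓ (g * h⁻¹) = ℓ g - ℓ h + (1 / 2 : ℚ) • wedge (φ h) (φ g) := by
  rw [hℓ.2, hℓ.map_inv hφ, map_inv_eq_neg_of_map_mul_eq_add hφ, wedge_neg_right, neg_wedge_swap,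
    sub_eq_add_neg]

theorem map_conj (hℓ : IsHalfCocycle φ ℓ) (hφ : ∀ g h, φ (g * h) = φ g + φ h) (g h : π) :
    ℓ (g * h * g⁻¹) = ℓ h + wedge (φ g) (φ h) := by
  rw [hℓ.map_mul_inv hφ, hℓ.2, hφ, ← neg_wedge_swap (φ g + φ h), wedge_add_left, wedge_self,
    zero_add, neg_wedge_swap]
  module

end IsHalfCocycle

end HalfCocycle

section Contraction

variable {H : Type*} [AddCommGroup H] [Module ℚ H]

/-- `act` is the contraction action of `⋀²H` on `H` with respect to the bilinear form `ω`. It is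
given by its values on wedges, which span `⋀²H`. -/
def IsContraction (ω : H →ₗ[ℚ] H →ₗ[ℚ] ℚ) (act : ⋀[ℚ]^2 H →ₗ[ℚ] H →ₗ[ℚ] H) : Prop :=
  ∀ X Y Z : H, act (wedge X Y) Z = ω Z X • Y - ω Z Y • X

/-- The vectors `X i`, `Y i` satisfy the relations of a symplectic basis for the form `ω`; they
need not span, so a symplectic basis in any genus, or part of one, is allowed. -/
structure IsSymplecticFamily {ι : Type*} [DecidableEq ι] (ω : H →ₗ[ℚ] H →ₗ[ℚ] ℚ)
    (X Y : ι → H) : Prop where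
  left_left : ∀ i j, ω (X i) (X j) = 0
  right_right : ∀ i j, ω (Y i) (Y j) = 0
  left_right : ∀ i j, ω (X i) (Y j) = if i = j then 1 else 0

variable {ω : H →ₗ[ℚ] H →ₗ[ℚ] ℚ} {act : ⋀[ℚ]^2 H →ₗ[ℚ] H →ₗ[ℚ] H}

theorem IsContraction.wedge_apply_left (hact : IsContraction ω act) (hω : ω.IsAlt) {X Y : H}
    (hXY : ω X Y = 0) : act (wedge X Y) X = 0 := by
  rw [hact, hω X, hXY, zero_smul, zero_smul, sub_zero]

theorem IsContraction.wedge_apply_right (hact : IsContraction ω act) (hω : ω.IsAlt) {X Y : H}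
    (hXY : ω X Y = 0) : act (wedge X Y) Y = 0 := by
  rw [hact, hω Y, ← hω.neg X Y, hXY, neg_zero, zero_smul, zero_smul, sub_zero]

theorem IsContraction.half_smul_add_half_smul_apply (hact : IsContraction ω act) (hω : ω.IsAlt)
    {Ω : ⋀[ℚ]^2 H} {X Y : H} (hXY : ω X Y = 0) (hΩX : act Ω X = -X) (hΩY : act Ω Y = -Y) :
    act ((1 / 2 : ℚ) • (Ω + wedge X Y)) (Y - X) +
      act ((1 / 2 : ℚ) • (-Ω + wedge X Y)) (X + Y) = X := by
  simp only [map_smul, map_add, map_sub, map_neg, LinearMap.smul_apply, LinearMap.add_apply,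
    LinearMap.neg_apply, hΩX, hΩY, hact.wedge_apply_left hω hXY, hact.wedge_apply_right hω hXY]
  module

namespace IsSymplecticFamily

variable {ι : Type*} [DecidableEq ι] {X Y : ι → H}

theorem right_left (hXY : IsSymplecticFamily ω X Y) (hω : ω.IsAlt) (i j : ι) :
    ω (Y i) (X j) = if j = i then -1 else 0 := by
  rw [← hω.neg, hXY.left_right, neg_ite, neg_zero]

theorem sum_wedge_apply_left (hXY : IsSymplecticFamily ω X Y) (hact : IsContraction ω act)
    {s : Finset ι} {i : ι} (hi : i ∈ s) : act (∑ k ∈ s, wedge (X k) (Y k)) (X i) = -X i := by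
  simp [hact _ _ _, hXY.left_left, hXY.left_right, hi]

theorem sum_wedge_apply_right (hXY : IsSymplecticFamily ω X Y) (hω : ω.IsAlt)
    (hact : IsContraction ω act) {s : Finset ι} {i : ι} (hi : i ∈ s) :
    act (∑ k ∈ s, wedge (X k) (Y k)) (Y i) = -Y i := by
  simp [hact _ _ _, hXY.right_right, hXY.right_left hω, hi]

theorem not_exists_eq_zsmul_add_zsmul (hXY : IsSymplecticFamily ω X Y) (hω : ω.IsAlt) (i j : ι) :
    ¬ ∃ m n : ℤ, X i = m • (X i + Y j) + n • (Y j - X i) := by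
  rintro ⟨m, n, h⟩
  have pair_Y : (1 : ℚ) = m - n := by
    simpa [hXY.left_right, hXY.right_right, ← sub_eq_add_neg] using congrArg (ω · (Y i)) h
  have pair_X : (0 : ℚ) = -m + -n := by
    simpa [hXY.left_left, hXY.right_left hω] using congrArg (ω · (X j)) h
  norm_cast at pair_Y pair_X
  omega

end IsSymplecticFamily

end Contraction

theorem example_detects_intersection_general {π H ι : Type*} [Group π] [AddCommGroup H]
    [Module ℚ H] [DecidableEq ι] {ω : H →ₗ[ℚ] H →ₗ[ℚ] ℚ} (hω : ω.IsAlt)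
    {act : ⋀[ℚ]^2 H →ₗ[ℚ] H →ₗ[ℚ] H} (hact : IsContraction ω act)
    {φ : π → H} (hφ : ∀ g h, φ (g * h) = φ g + φ h)
    {ℓ : π → ⋀[ℚ]^2 H} (hℓ : IsHalfCocycle φ ℓ)
    {X Y : ι → H} (hXY : IsSymplecticFamily ω X Y) {i j : ι} (hij : i ≠ j) {x₁ x₂ y₂ : π}
    (hφx₁ : φ x₁ = X i) (hφx₂ : φ x₂ = X j) (hφy₂ : φ y₂ = Y j)
    (hℓx₁ : ℓ x₁ = (1 / 2 : ℚ) • wedge (X i) (Y i))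
    (hℓy₂ : ℓ y₂ = -((1 / 2 : ℚ) • wedge (X j) (Y j)))
    {a b : π} (ha : a = x₁ * x₂ * y₂ * x₂⁻¹) (hb : b = y₂ * x₁⁻¹) :
    ω (φ a) (φ b) = 0 ∧
    act (ℓ a) (φ b) + act (ℓ b) (φ a) = X i ∧
    ¬ ∃ m n : ℤ, X i = m • φ a + n • φ b := by
  have φ_inv := map_inv_eq_neg_of_map_mul_eq_add hφ
  have φ_a : φ a = X i + Y j := by
    rw [ha, hφ, hφ, hφ, φ_inv, hφx₁, hφx₂, hφy₂]
    abel
  have φ_b : φ b = Y j - X i := by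
    rw [hb, hφ, φ_inv, hφx₁, hφy₂, sub_eq_add_neg]
  have ℓ_a : ℓ a = (1 / 2 : ℚ) • (∑ k ∈ {i, j}, wedge (X k) (Y k) + wedge (X i) (Y j)) := by
    have φ_conj : φ (x₂ * y₂ * x₂⁻¹) = Y j := by
      rw [hφ, hφ, φ_inv, hφy₂, add_neg_cancel_comm]
    rw [ha, mul_assoc x₁, mul_assoc x₁, hℓ.2, hℓ.map_conj hφ, φ_conj, hφx₁, hφx₂, hφy₂, hℓx₁,
      hℓy₂, Finset.sum_pair hij]
    module
  have ℓ_b : ℓ b = (1 / 2 : ℚ) • (-∑ k ∈ {i, j}, wedge (X k) (Y k) + wedge (X i) (Y j)) := by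
    rw [hb, hℓ.map_mul_inv hφ, hφx₁, hφy₂, hℓx₁, hℓy₂, Finset.sum_pair hij]
    module
  have ω_XY : ω (X i) (Y j) = 0 := by rw [hXY.left_right, if_neg hij]
  rw [φ_a, φ_b, ℓ_a, ℓ_b]
  refine ⟨?_, ?_, hXY.not_exists_eq_zsmul_add_zsmul hω i j⟩
  · simp [ω_XY, hXY.left_left, hXY.right_right, hXY.right_left hω, hij]
  · exact hact.half_smul_add_half_smul_apply hω ω_XY (hXY.sum_wedge_apply_left hact (by simp))
      (hXY.sum_wedge_apply_right hω hact (by simp))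

section StandardForm

variable {ω : (Fin 4 → ℚ) →ₗ[ℚ] (Fin 4 → ℚ) →ₗ[ℚ] ℚ}

theorem isAlt_of_apply_eq
    (hω : ∀ u v : Fin 4 → ℚ, ω u v = u 0 * v 1 - u 1 * v 0 + u 2 * v 3 - u 3 * v 2) :
    ω.IsAlt := fun u ↦ by
  rw [hω]
  ring

theorem isSymplecticFamily_e
    (hω : ∀ u v : Fin 4 → ℚ, ω u v = u 0 * v 1 - u 1 * v 0 + u 2 * v 3 - u 3 * v 2) :
    IsSymplecticFamily ω ![e 0, e 2] ![e 1, e 3] where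
  left_left := by simp [Fin.forall_fin_two, hω, e]
  right_right := by simp [Fin.forall_fin_two, hω, e]
  left_right := by simp [Fin.forall_fin_two, hω, e]

end StandardForm

theorem example_detects_intersection
    (ω : (Fin 4 → ℚ) →ₗ[ℚ] (Fin 4 → ℚ) →ₗ[ℚ] ℚ)
    (hω : ∀ u v : Fin 4 → ℚ, ω u v = u 0 * v 1 - u 1 * v 0 + u 2 * v 3 - u 3 * v 2)
    (act : ⋀[ℚ]^2 (Fin 4 → ℚ) →ₗ[ℚ] (Fin 4 → ℚ) →ₗ[ℚ] (Fin 4 → ℚ))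
    (hact : ∀ X Y Z : Fin 4 → ℚ, act (wedge X Y) Z = ω Z X • Y - ω Z Y • X)
    (φ : FreeGroup (Fin 4) → (Fin 4 → ℚ))
    (hφ : ∀ g h : FreeGroup (Fin 4), φ (g * h) = φ g + φ h)
    (hφ₀ : ∀ i : Fin 4, φ (FreeGroup.of i) = e i)
    (ℓ : FreeGroup (Fin 4) → ⋀[ℚ]^2 (Fin 4 → ℚ))
    (hℓ : IsHalfCocycle φ ℓ)
    (hx1 : ℓ (FreeGroup.of 0) = (1/2 : ℚ) • wedge (e 0) (e 1))
    (hy1 : ℓ (FreeGroup.of 1) = -((1/2 : ℚ) • wedge (e 0) (e 1)))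
    (hx2 : ℓ (FreeGroup.of 2) = (1/2 : ℚ) • wedge (e 2) (e 3))
    (hy2 : ℓ (FreeGroup.of 3) = -((1/2 : ℚ) • wedge (e 2) (e 3)))
    (a b : FreeGroup (Fin 4))
    (ha : a = FreeGroup.of 0 * FreeGroup.of 2 * FreeGroup.of 3 * (FreeGroup.of 2)⁻¹)
    (hb : b = FreeGroup.of 3 * (FreeGroup.of 0)⁻¹) :
    ω (φ a) (φ b) = 0 ∧
    act (ℓ a) (φ b) + act (ℓ b) (φ a) = e 0 ∧
    ¬ ∃ m n : ℤ, e 0 = m • φ a + n • φ b :=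
  example_detects_intersection_general (isAlt_of_apply_eq hω) hact hφ hℓ (isSymplecticFamily_e hω)
    Fin.zero_ne_one (hφ₀ 0) (hφ₀ 2) (hφ₀ 3) hx1 hy2 ha hb
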